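/- arXiv:2212.00274 — 15 statements merged into one kernel-verified Lean document; each statement's English description precedes it below -/
import Mathlib

section
/- Let X be a nonempty set and let r : X × X → X × X and α : X → X be maps, with r(x,y) = (λ_x(y), ρ_y(x)). Then (X,r,α) is a left non-degenerate involutive set-theoretic solution to the Hom-Yang-Baxter equation if and only if for all x,y ∈ X: (1) λ_x is bijective; (2) ρ_y(x) = λ_{λ_x(y)}^{-1}(x); (3) α∘λ_x = λ_{α(x)}∘α; (4) α∘λ_{α(x)}∘λ_{λ_x^{-1}(y)} = λ_{α(y)}∘λ_{λ_y^{-1}(x)}∘α; (5) α∘λ_x∘λ_{λ_{α(x)}^{-1}(y)} = λ_{α(y)}∘λ_{λ_y^{-1}(α(x))}∘α; (6) α∘λ_x∘λ_{λ_{α(x)}^{-1}(α(y))} = λ_y∘λ_{λ_{α(y)}^{-1}(α(x))}∘α. -/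
/-!
Write `L x = λ_x` and `d x y = λ_x⁻¹ y`. Involutivity is equivalent to `L (L x y) (R y x) = x`, which
is condition (2), and given this, `r` commutes with `α × α` exactly when `α (L x y) = L (α x) (α y)`.

The Hom-Yang-Baxter equation at `(x, y, z)` is a system of three equations, one per component.
The substitution `u = L x y`, `p = L (α x) (L y z)` is a bijective change of variables from
`(x, y, z)` to `(x, u, p)`. In these variables the first component is (4) for the pair `(x, u)`.
Modulo the first, the second is (5) for the pair `(x, p)`, and modulo the first two, the third is
(6) for the pair `(u, p)`, applied to the point `t` with `x = L u (L s t)`, where `s = d (α u) (α p)`.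
The three equivalences are `first_iff`, `second_iff` and `third_iff`.
-/

open Function

variable {X : Type*}

/-- The left component map `λ_x` of `r`, i.e. `λ_x (y) = (r (x,y)).1`. -/
def lam (r : X × X → X × X) (x y : X) : X := (r (x, y)).1

/-- The right component map `ρ_y` of `r`, i.e. `ρ_y (x) = (r (x,y)).2`. -/
def rho (r : X × X → X × X) (y x : X) : X := (r (x, y)).2

/-- The map `α × r : (x,y,z) ↦ (α x, r (y,z))` on `X × X × X`. -/
def amr (α : X → X) (r : X × X → X × X) : X × X × X → X × X × X :=
  fun p => (α p.1, r p.2)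

/-- The map `r × α : (x,y,z) ↦ (r (x,y), α z)` on `X × X × X`. -/
def rma (r : X × X → X × X) (α : X → X) : X × X × X → X × X × X :=
  fun p => ((r (p.1, p.2.1)).1, (r (p.1, p.2.1)).2, α p.2.2)

/-- `(X, r, α)` is a set-theoretic solution to the Hom-Yang-Baxter equation:
`r ∘ (α × α) = (α × α) ∘ r` and `(α × r)(r × α)(α × r) = (r × α)(α × r)(r × α)`. -/
def IsHYBESol (r : X × X → X × X) (α : X → X) : Prop :=
  (∀ p : X × X, r (α p.1, α p.2) = (α (r p).1, α (r p).2)) ∧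
  amr α r ∘ rma r α ∘ amr α r = rma r α ∘ amr α r ∘ rma r α

section Components

variable {L d R : X → X → X} {α : X → X}

lemma map_leftDiv (h1 : ∀ x y, L x (d x y) = y) (h2 : ∀ x y, d x (L x y) = y)
    (h3 : ∀ x y, α (L x y) = L (α x) (α y)) (x y : X) : α (d x y) = d (α x) (α y) := by
  rw [← h2 (α x) (α (d x y)), ← h3, h1]

lemma first_iff (h1 : ∀ x y, L x (d x y) = y) (h2 : ∀ x y, d x (L x y) = y)
    (hR : ∀ x y, R y x = d (L x y) x) :
    (∀ x y z, α (L (α x) (L y z)) = L (α (L x y)) (L (R y x) (α z))) ↔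
      ∀ x y z, α (L (α x) (L (d x y) z)) = L (α y) (L (d y x) (α z)) := by
  constructor
  · intro h x y z
    have := h x (d x y) z
    rwa [hR, h1] at this
  · intro h x y z
    have := h x (L x y) z
    rwa [h2, ← hR] at this

/-- Given the first component, the right-hand side of the second component is
`d (α p) (α u)`, with `u = L x y` and `p = L (α x) (L y z)`. -/
lemma second_rhs (hR : ∀ x y, R y x = d (L x y) x)
    (hA : ∀ x y z, α (L (α x) (L y z)) = L (α (L x y)) (L (R y x) (α z))) (x y z : X) :
    R (L (R y x) (α z)) (α (L x y)) = d (α (L (α x) (L y z))) (α (L x y)) := by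
  rw [hR, ← hA]

lemma second_iff (h1 : ∀ x y, L x (d x y) = y) (h2 : ∀ x y, d x (L x y) = y)
    (hR : ∀ x y, R y x = d (L x y) x)
    (hA : ∀ x y z, α (L (α x) (L y z)) = L (α (L x y)) (L (R y x) (α z))) :
    (∀ x y z, L (R (L y z) (α x)) (α (R z y)) = R (L (R y x) (α z)) (α (L x y))) ↔
      ∀ x p w, α (L x (L (d (α x) p) w)) = L (α p) (L (d p (α x)) (α w)) := by
  constructor
  · intro h x p w
    -- The point `(x, y, z)` for which `L y z = d (α x) p` and `R z y = w`.
    have := h x (L (d (α x) p) w) (d (L (d (α x) p) w) (d (α x) p))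
    rw [second_rhs hR hA, hR, hR _ (d (L (d (α x) p) w) (d (α x) p))] at this
    simp only [h1, h2] at this
    rw [this, h1]
  · intro h x y z
    have := h x (L (α x) (L y z)) (d (L y z) y)
    rw [h2, h1] at this
    rw [second_rhs hR hA, this, h2, ← hR, ← hR]

lemma third_iff (h1 : ∀ x y, L x (d x y) = y) (h2 : ∀ x y, d x (L x y) = y)
    (hR : ∀ x y, R y x = d (L x y) x)
    (hA : ∀ x y z, α (L (α x) (L y z)) = L (α (L x y)) (L (R y x) (α z)))
    (hB : ∀ x y z, L (R (L y z) (α x)) (α (R z y)) = R (L (R y x) (α z)) (α (L x y))) :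
    (∀ x y z, R (α (R z y)) (R (L y z) (α x)) = α (R (α z) (R y x))) ↔
      ∀ u p t, α (L u (L (d (α u) (α p)) t)) = L p (L (d (α p) (α u)) (α t)) := by
  -- Both sides of the third component in terms of `x`, `u = L x y` and `p = L (α x) (L y z)`.
  have lhs : ∀ x y z, R (α (R z y)) (R (L y z) (α x)) =
      d (d (α (L (α x) (L y z))) (α (L x y))) (d (L (α x) (L y z)) (α x)) := by
    intro x y z
    rw [hR (R (L y z) (α x)), hB, second_rhs hR hA, hR (α x)]
  have rhs : ∀ x y z, R (α z) (R y x) =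
      d (d (α (L x y)) (α (L (α x) (L y z)))) (d (L x y) x) := by
    intro x y z
    rw [hR (R y x), hA, h2, hR x y]
  constructor
  · intro h u p t
    obtain ⟨x, hx⟩ : ∃ x, x = L u (L (d (α u) (α p)) t) := ⟨_, rfl⟩
    -- The point `(x, y, z)` for which `L x y = u` and `L (α x) (L y z) = p`.
    have := h x (d x u) (d (d x u) (d (α x) p))
    rw [lhs, rhs] at this
    simp only [h1] at this
    have ht : d (d (α u) (α p)) (d u x) = t := by rw [hx, h2, h2]
    rw [ht] at this
    rw [← hx, ← this, h1, h1]
  · intro h x y z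
    have := h (L x y) (L (α x) (L y z))
      (d (d (α (L x y)) (α (L (α x) (L y z)))) (d (L x y) x))
    rw [h1, h1] at this
    rw [lhs, rhs]
    exact (congrArg (fun a => d _ (d _ a)) this).trans (by simp only [h2])

end Components

theorem stmt1 [Nonempty X] (r : X × X → X × X) (α : X → X) :
    (IsHYBESol r α ∧ (∀ x, Function.Bijective (lam r x)) ∧ r ∘ r = id) ↔
      ((∀ x, Function.Bijective (lam r x)) ∧
       (∀ x y, rho r y x = Function.invFun (lam r (lam r x y)) x) ∧
       (∀ x, α ∘ lam r x = lam r (α x) ∘ α) ∧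
       (∀ x y, α ∘ lam r (α x) ∘ lam r (Function.invFun (lam r x) y) =
           lam r (α y) ∘ lam r (Function.invFun (lam r y) x) ∘ α) ∧
       (∀ x y, α ∘ lam r x ∘ lam r (Function.invFun (lam r (α x)) y) =
           lam r (α y) ∘ lam r (Function.invFun (lam r y) (α x)) ∘ α) ∧
       (∀ x y, α ∘ lam r x ∘ lam r (Function.invFun (lam r (α x)) (α y)) =
           lam r y ∘ lam r (Function.invFun (lam r (α y)) (α x)) ∘ α)) := by
  have key : (∀ x, Function.Bijective (lam r x)) →
      (∀ x y, lam r x (invFun (lam r x) y) = y) ∧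
        (∀ x y, invFun (lam r x) (lam r x y) = y) := fun hb => by
    have h1 : ∀ x y, lam r x (invFun (lam r x) y) = y :=
      fun x y => rightInverse_invFun (hb x).2 y
    have h2 : ∀ x y, invFun (lam r x) (lam r x y) = y :=
      fun x y => leftInverse_invFun (hb x).1 y
    exact And.intro h1 h2
  have hr : ∀ x y, r (x, y) = (lam r x y, rho r y x) := fun _ _ => rfl
  have ybe : amr α r ∘ rma r α ∘ amr α r = rma r α ∘ amr α r ∘ rma r α ↔
      (∀ x y z, α (lam r (α x) (lam r y z)) =
        lam r (α (lam r x y)) (lam r (rho r y x) (α z))) ∧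
      (∀ x y z, lam r (rho r (lam r y z) (α x)) (α (rho r z y)) =
        rho r (lam r (rho r y x) (α z)) (α (lam r x y))) ∧
      (∀ x y z, rho r (α (rho r z y)) (rho r (lam r y z) (α x)) =
        α (rho r (α z) (rho r y x))) := by
    simp only [funext_iff, Prod.forall, comp_apply, amr, rma, hr, Prod.mk.injEq, forall_and]
  simp only [IsHYBESol, ybe]
  simp only [funext_iff, comp_apply, Prod.forall, hr, id, Prod.mk.injEq]
  constructor
  · rintro ⟨⟨hα, hA, hB, hC⟩, hb, hi⟩
    obtain ⟨h1, h2⟩ := key hb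
    have hR : ∀ x y, rho r y x = invFun (lam r (lam r x y)) x := fun x y => by
      rw [← h2 (lam r x y) (rho r y x), (hi x y).1]
    have h3 : ∀ x y, α (lam r x y) = lam r (α x) (α y) := fun x y => (hα x y).1.symm
    exact ⟨hb, hR, h3, (first_iff h1 h2 hR).1 hA, (second_iff h1 h2 hR hA).1 hB,
      (third_iff h1 h2 hR hA hB).1 hC⟩
  · rintro ⟨hb, hR, h3, h4, h5, h6⟩
    obtain ⟨h1, h2⟩ := key hb
    have hA := (first_iff h1 h2 hR).2 h4
    have hB := (second_iff h1 h2 hR hA).2 h5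
    refine ⟨⟨fun x y => ⟨(h3 x y).symm, ?_⟩, hA, hB, (third_iff h1 h2 hR hA hB).2 h6⟩, hb,
      fun x y => ⟨?_, ?_⟩⟩
    · rw [hR, hR, map_leftDiv h1 h2 h3, h3]
    · rw [hR, h1]
    · rw [hR (lam r x y), hR x y, h1, h2]
end

section
/- Let (X,r,α) be a left non-degenerate involutive set-theoretic solution to the Hom-Yang-Baxter equation, with r(x,y) = (λ_x(y), ρ_y(x)). Then for all x ∈ X: (1) λ_x ∘ α = λ_{α²(x)} ∘ α, and (2) λ_x ∘ α² = α² ∘ λ_x. -/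
/-!
Write `r (x, y) = (λ_x y, ρ_y x)`, `u = λ_x y`, `v = ρ_y x`. The first component of the Hom-Yang-Baxter equation reads
`λ_{α²x} λ_{αy} α = λ_{αu} λ_v α` (`lam_braid`).

* Feeding `r (x, y) = (u, v)` back into this identity, and using `r² = id`, gives
  `λ_{α³x} λ_{α²y} α = λ_{αx} λ_y α` (`lam_lam_alpha`).
* The second component, rewritten with `r² = id`, can be matched against the first component at
  `(αx, λ_y z, ρ_z y)`; this gives `λ_{α³x} α = α λ_x = λ_{αx} α` (`lam_alpha_cube`).

Since `λ_{α²y} α = α λ_{αy}` has image in the image of `α`, the second fact turns the first into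
`λ_{αx} λ_{α²y} α = λ_{αx} λ_y α`, and injectivity of `λ_{αx}` yields `λ_{α²y} α = λ_y α`.
The second claim then follows because `λ_{α²x} α² = α² λ_x`.
-/

open Function

variable {X : Type*}

section HYBE

variable {r : X × X → X × X} {α : X → X}

lemma IsHYBESol.map_lam (h : IsHYBESol r α) (x y : X) :
    α (lam r x y) = lam r (α x) (α y) :=
  (congrArg Prod.fst (h.1 (x, y))).symm

lemma IsHYBESol.map_rho (h : IsHYBESol r α) (x y : X) :
    α (rho r y x) = rho r (α y) (α x) :=
  (congrArg Prod.snd (h.1 (x, y))).symm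

lemma lam_lam_rho (hi : r ∘ r = id) (x y : X) : lam r (lam r x y) (rho r y x) = x :=
  congrArg Prod.fst (congrFun hi (x, y))

lemma rho_rho_lam (hi : r ∘ r = id) (x y : X) : rho r (rho r y x) (lam r x y) = y :=
  congrArg Prod.snd (congrFun hi (x, y))

/-- First component of the Hom-Yang-Baxter equation. -/
lemma IsHYBESol.lam_braid (h : IsHYBESol r α) (x y z : X) :
    lam r (α (α x)) (lam r (α y) (α z)) =
      lam r (α (lam r x y)) (lam r (rho r y x) (α z)) := by
  have e : α (lam r (α x) (lam r y z)) =
      lam r (α (lam r x y)) (lam r (rho r y x) (α z)) :=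
    congrArg Prod.fst (congrFun h.2 (x, y, z))
  rw [← e, h.map_lam, h.map_lam y z]

/-- Second component of the Hom-Yang-Baxter equation. -/
lemma IsHYBESol.mid_braid (h : IsHYBESol r α) (x y z : X) :
    lam r (rho r (lam r y z) (α x)) (α (rho r z y)) =
      rho r (lam r (rho r y x) (α z)) (α (lam r x y)) :=
  congrArg (fun p => p.2.1) (congrFun h.2 (x, y, z))

lemma IsHYBESol.lam_lam_alpha (h : IsHYBESol r α) (hi : r ∘ r = id) (x y z : X) :
    lam r (α (α (α x))) (lam r (α (α y)) (α z)) = lam r (α x) (lam r y (α z)) := by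
  have e1 := h.lam_braid (α x) (α y) z
  have e2 := h.lam_braid (lam r x y) (rho r y x) z
  rw [lam_lam_rho hi, rho_rho_lam hi] at e2
  rw [e1, ← e2, ← h.map_lam, ← h.map_rho]

lemma IsHYBESol.lam_alpha_cube (h : IsHYBESol r α) (hi : r ∘ r = id) (x y : X) :
    lam r (α (α (α x))) (α y) = lam r (α x) (α y) := by
  -- Any third entry of the triple would do; `y` itself is used.
  have e1 := h.lam_braid (α x) (lam r y y) (rho r y y)
  have e2 := lam_lam_rho hi (α (lam r x y)) (lam r (rho r y x) (α y))
  rw [h.mid_braid, ← h.map_lam (lam r y y), lam_lam_rho hi, h.map_lam (α x), h.map_lam y,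
    h.lam_braid x y y, e2, h.map_lam] at e1
  exact e1

end HYBE

theorem stmt2 [Nonempty X] (r : X × X → X × X) (α : X → X)
    (h : IsHYBESol r α) (hl : ∀ x, Function.Bijective (lam r x))
    (hi : r ∘ r = id) :
    ∀ x : X, lam r x ∘ α = lam r (α (α x)) ∘ α ∧
      lam r x ∘ (α ∘ α) = (α ∘ α) ∘ lam r x := by
  have key : ∀ x y, lam r x (α y) = lam r (α (α x)) (α y) := fun x y => by
    apply (hl (α x)).injective
    rw [← h.lam_lam_alpha hi, ← h.map_lam (α x) y, h.lam_alpha_cube hi]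
  refine fun x => ⟨funext (key x), funext fun y => ?_⟩
  simp only [Function.comp_apply]
  rw [key, h.map_lam, h.map_lam]
end

section
/- Let X be a nonempty set and let r : X × X → X × X and α : X → X be maps, with r(x,y) = (λ_x(y), ρ_y(x)). Then (X,r,α) is a left non-degenerate involutive set-theoretic solution to the Hom-Yang-Baxter equation if and only if for all x,y ∈ X: (1) λ_x is bijective; (2) ρ_y(x) = λ_{λ_x(y)}^{-1}(x); (3) α∘λ_x = λ_{α(x)}∘α; (4) λ_x∘α = α∘λ_{α(x)}; (5) α∘λ_x∘λ_{λ_{α(x)}^{-1}(y)} = λ_{α(y)}∘λ_{λ_y^{-1}(α(x))}∘α. -/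
/-!
Write `L x = λ_x` and `R y x = ρ_y x`. When every `L x` is bijective, involutivity of `r` amounts to
`L (L x y) (R y x) = x`, which is the formula for `ρ`, and compatibility of `r` with `α × α` amounts
to `α ∘ L x = L (α x) ∘ α`. So the point is to compare the three components of the Hom-Yang-Baxter
equation with the last two conditions, the twisted commutation `L x ∘ α = α ∘ L (α x)` and the
braid condition, which (substituting `L (α x) v` for `y`) reads
`α (L x (L v w)) = L (α (L (α x) v)) (L (R v (α x)) (α w))`.

From the equation to twisted commutation: substituting `(x, y, z) ↦ (α x, L y z, R z y)` in the
first component and comparing with the second gives `α ∘ L (α² x) = α ∘ L x`; a similar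
substitution, compared with the third component, gives `L (α² c) p = α x` whenever `L c p = α x`.
The latter says `(L c)⁻¹ ∘ α = (L (α² c))⁻¹ ∘ α = α ∘ (L (α c))⁻¹`, which is twisted commutation.
Given this, the braid condition is the first component at `α x` in place of `x`.

Conversely, the two commutation rules give `L (α² x) ∘ α = L x ∘ α`, and `L p ∘ α` depends only on
`α p`. These let one pass from the braid condition, which is the identity
`L x (L (α v) (α w)) = L (α (L x v)) (L (R v x) (α w))` for `x` in the range of `α`, to that
identity for all `x`, applying the condition at `α x` in place of `x`. The identity is the first
component of the equation; the other two follow from it by cancelling an injective `L`.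
-/

open Function

variable {X : Type*}

section Components

variable {L R : X → X → X} {α : X → X}

/-- Twisted commutation of `L` with `α`, from the three components of the Hom-Yang-Baxter equation. -/
lemma lam_comp_alpha_of_hybe (hL : ∀ x, Bijective (L x))
    (h2 : ∀ x y, L (L x y) (R y x) = x)
    (h3 : ∀ x y, α (L x y) = L (α x) (α y))
    (e1 : ∀ x y z, α (L (α x) (L y z)) = L (α (L x y)) (L (R y x) (α z)))
    (e2 : ∀ x y z, L (R (L y z) (α x)) (α (R z y)) = R (L (R y x) (α z)) (α (L x y)))
    (e3 : ∀ x y z, R (α (R z y)) (R (L y z) (α x)) = α (R (α z) (R y x)))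
    (x w : X) : L x (α w) = α (L (α x) w) := by
  have hsq : ∀ x y, α (L (α (α x)) y) = α (L x y) := by
    intro x y
    have h := e1 (α x) (L y y) (R y y)
    rw [h2, e2, e1, h2] at h
    exact h
  -- `p = (L c)⁻¹ (α x)` is also `(L (α² c))⁻¹ (α x)`.
  have hinv : ∀ c p x, L c p = α x → L (α (α c)) p = α x := by
    intro c p x hp
    obtain ⟨d, hd⟩ := (hL (α x)).2 c
    -- The middle variable of the equation is taken to be `x`; any value would do.
    obtain ⟨z, hz⟩ := (hL x).2 d
    have hp' : p = R (L x z) (α x) := by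
      apply (hL c).1
      rw [hp, hz, ← hd, h2]
    have hb : L (R (L (R x x) (α z)) (α (L x x))) (α (R (α z) (R x x))) = p := by
      rw [← e3, ← e2, h2, hp']
    have h := e1 (α (L x x)) (L (R x x) (α z)) (R (α z) (R x x))
    rw [h2, hb, hsq, h2, ← e1, hz, hd] at h
    exact h.symm
  obtain ⟨p, hp⟩ := (hL x).2 (α (L (α x) w))
  have h := hinv _ _ _ hp
  rw [h3] at h
  rw [← (hL _).1 h, hp]

/-- The first component of the Hom-Yang-Baxter equation, rewritten using the commutation rules `h3`
and `h4`. The hypothesis `h5` is only the case of `x` in the range of `α`. -/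
lemma braid_of_conditions (hL : ∀ x, Bijective (L x))
    (h2 : ∀ x y, L (L x y) (R y x) = x)
    (h3 : ∀ x y, α (L x y) = L (α x) (α y))
    (h4 : ∀ x y, L x (α y) = α (L (α x) y))
    (h5 : ∀ x v w, α (L x (L v w)) = L (α (L (α x) v)) (L (R v (α x)) (α w)))
    (x v w : X) : L x (L (α v) (α w)) = L (α (L x v)) (L (R v x) (α w)) := by
  have hsq : ∀ x y, L (α (α x)) (α y) = L x (α y) := fun x y => by rw [h4 x, h3]
  have hu : α (L (α (α x)) v) = α (L x v) := by rw [h3, h3, hsq]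
  have hR : α (R v (α (α x))) = α (α (α (R v x))) := by
    apply (hL (α (L x v))).1
    rw [← hu, ← h3, h2, hu, ← hsq, ← h3, ← h3, ← h3, h2]
  have hp : L (R v (α (α x))) (α w) = L (R v x) (α w) := by
    rw [h4, hR, ← h4, hsq]
  have h := h5 (α x) v w
  rw [hu, hp, h3, hsq] at h
  rw [← h3, h]

end Components

theorem stmt3 [Nonempty X] (r : X × X → X × X) (α : X → X) :
    (IsHYBESol r α ∧ (∀ x, Function.Bijective (lam r x)) ∧ r ∘ r = id) ↔
      ((∀ x, Function.Bijective (lam r x)) ∧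
       (∀ x y, rho r y x = Function.invFun (lam r (lam r x y)) x) ∧
       (∀ x, α ∘ lam r x = lam r (α x) ∘ α) ∧
       (∀ x, lam r x ∘ α = α ∘ lam r (α x)) ∧
       (∀ x y, α ∘ lam r x ∘ lam r (Function.invFun (lam r (α x)) y) =
           lam r (α y) ∘ lam r (Function.invFun (lam r y) (α x)) ∘ α)) := by
  have hdef : ∀ x y, r (x, y) = (lam r x y, rho r y x) := fun _ _ => rfl
  -- The Hom-Yang-Baxter equation, component by component.
  have hyb : IsHYBESol r α ↔
      (∀ x y, lam r (α x) (α y) = α (lam r x y) ∧ rho r (α y) (α x) = α (rho r y x)) ∧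
      ∀ x y z,
        α (lam r (α x) (lam r y z)) = lam r (α (lam r x y)) (lam r (rho r y x) (α z)) ∧
        lam r (rho r (lam r y z) (α x)) (α (rho r z y)) =
          rho r (lam r (rho r y x) (α z)) (α (lam r x y)) ∧
        rho r (α (rho r z y)) (rho r (lam r y z) (α x)) = α (rho r (α z) (rho r y x)) := by
    simp only [IsHYBESol, funext_iff, Prod.forall, amr, rma, comp_apply, hdef, Prod.mk.injEq]
  rw [hyb]
  constructor
  · rintro ⟨⟨ha, he⟩, hL, hr⟩
    have h2 : ∀ x y, lam r (lam r x y) (rho r y x) = x := fun x y =>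
      congrArg Prod.fst (congrFun hr (x, y))
    have h3 : ∀ x y, α (lam r x y) = lam r (α x) (α y) := fun x y => (ha x y).1.symm
    have h4 := lam_comp_alpha_of_hybe hL h2 h3 (fun x y z => (he x y z).1)
      (fun x y z => (he x y z).2.1) (fun x y z => (he x y z).2.2)
    have hinv : ∀ x y, rho r y x = invFun (lam r (lam r x y)) x := fun x y =>
      (hL (lam r x y)).1 (by rw [h2, rightInverse_invFun (hL _).2])
    refine ⟨hL, hinv, fun x => funext (h3 x), fun x => funext (h4 x), fun x y => funext fun w => ?_⟩
    obtain ⟨v, rfl⟩ := (hL (α x)).2 y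
    simp only [comp_apply]
    rw [leftInverse_invFun (hL _).1, ← hinv, ← (he (α x) v w).1, ← h4, ← h3]
  · rintro ⟨hL, hinv, h3', h4', h5'⟩
    have h3 : ∀ x y, α (lam r x y) = lam r (α x) (α y) := fun x => congrFun (h3' x)
    have h4 : ∀ x y, lam r x (α y) = α (lam r (α x) y) := fun x => congrFun (h4' x)
    have h2 : ∀ x y, lam r (lam r x y) (rho r y x) = x := fun x y => by
      rw [hinv, rightInverse_invFun (hL _).2]
    have hbr := braid_of_conditions hL h2 h3 h4 fun x v w => by
      have h := congrFun (h5' x (lam r (α x) v)) w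
      simp only [comp_apply] at h
      rwa [leftInverse_invFun (hL _).1, ← hinv] at h
    have hsq : ∀ x y, lam r (α (α x)) (α y) = lam r x (α y) := fun x y => by rw [h4 x, h3]
    have e1 : ∀ x y z, α (lam r (α x) (lam r y z)) =
        lam r (α (lam r x y)) (lam r (rho r y x) (α z)) := fun x y z => by
      rw [← hbr, ← h4, h3]
    have e2 : ∀ x y z, lam r (rho r (lam r y z) (α x)) (α (rho r z y)) =
        rho r (lam r (rho r y x) (α z)) (α (lam r x y)) := fun x y z => by
      apply (hL (α (lam r (α x) (lam r y z)))).1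
      rw [← hbr, ← h3, h2, e1, h2, h3]
    refine ⟨⟨fun x y => ⟨(h3 x y).symm, ?_⟩, fun x y z => ⟨e1 x y z, e2 x y z, ?_⟩⟩, hL, ?_⟩
    · apply (hL (lam r (α x) (α y))).1
      rw [h2, ← h3, ← h3, h2]
    · -- It suffices to compare after applying `L b`, where `b` is the common second component, and
      -- then `L c` with `c = L (α x) (L y z)`; there `L c` may be replaced by `L (α² c)`.
      apply (hL (lam r (rho r (lam r y z) (α x)) (α (rho r z y)))).1
      apply (hL (lam r (α x) (lam r y z))).1
      rw [h2, h2, e2, h4 (rho r _ _), ← hsq, ← h4 (rho r _ _), e1, ← hbr, ← h3 _ (rho r _ _), h2, ← h3, h2]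
    · funext ⟨x, y⟩
      have h : rho r (rho r y x) (lam r x y) = y := (hL x).1 (by
        have h := h2 (lam r x y) (rho r y x)
        rwa [h2 x y] at h)
      simp only [comp_apply, hdef, id_eq, h2, h]
end

section
/- Let (X,r,α) be a left non-degenerate involutive set-theoretic solution to the Hom-Yang-Baxter equation, with r(x,y) = (λ_x(y), ρ_y(x)). Define a binary operation on X by x·y = λ_x^{-1}(y). Then (X,·,α) is a Hom-cycle set; that is, each left multiplication x ↦ (y ↦ x·y) is bijective, α(x·y) = α(x)·α(y), and the three Hom-cycle set identities hold for all x,y,z ∈ X. -/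
/-!
Involutivity and left non-degeneracy say that `r (x, y) = (u, w)` forces `y = x · u` and
`w = u · x`; conversely `r (x, x · u) = (u, u · x)`. So evaluating the Hom-Yang-Baxter equation at
`(x, x · p, (x · p) · (α x · a))` keeps every intermediate value expressible through `·` and `α`,
and its three components, read in these terms, are exactly the three Hom-cycle set identities
(with `x, p, a` in suitable roles). As `x, p, a` are arbitrary, no injectivity of `α` is needed.
-/

open Function

variable {X : Type*}

/-- `(X, m, α)` is a left Hom-quasigroup: every left multiplication `m x` is
bijective and `α` is an endomorphism. -/
def LeftHomQuasigroup (m : X → X → X) (α : X → X) : Prop :=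
  (∀ x, Function.Bijective (m x)) ∧ ∀ x y, α (m x y) = m (α x) (α y)

/-- `(X, m, α)` is a Hom-cycle set. -/
def HomCycleSet (m : X → X → X) (α : X → X) : Prop :=
  LeftHomQuasigroup m α ∧
  (∀ x y z, α (m (m x y) (m (α x) z)) = m (m y x) (m (α y) (α z))) ∧
  (∀ x y z, α (m (m (α x) y) (m x z)) = m (m y (α x)) (m (α y) (α z))) ∧
  (∀ x y z, α (m (m (α x) (α y)) (m x z)) = m (m (α y) (α x)) (m y (α z)))

/-- The two halves of the dictionary between `r` and `·`: the graph of `r` consists of the pairs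
`((x, x · u), (u, u · x))`. The second coordinate comes from involutivity. -/
lemma r_eq_iff [Nonempty X] (r : X × X → X × X) (hl : ∀ x, Function.Bijective (lam r x))
    (hi : r ∘ r = id) (x y u w : X) :
    r (x, y) = (u, w) ↔ y = Function.invFun (lam r x) u ∧ w = Function.invFun (lam r u) x := by
  have key : ∀ x y u w, r (x, y) = (u, w) →
      y = Function.invFun (lam r x) u ∧ w = Function.invFun (lam r u) x := by
    intro x y u w h
    have h' : r (u, w) = (x, y) := by rw [← h]; exact congrFun hi (x, y)
    have h1 : lam r x y = u := by simp [lam, h]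
    have h2 : lam r u w = x := by simp [lam, h']
    rw [← Function.leftInverse_invFun (hl x).1 y, ← Function.leftInverse_invFun (hl u).1 w, h1, h2]
    exact ⟨rfl, rfl⟩
  refine ⟨key x y u w, ?_⟩
  rintro ⟨rfl, rfl⟩
  have h1 : (r (x, Function.invFun (lam r x) u)).1 = u :=
    Function.rightInverse_invFun (hl x).2 u
  have h2 := (key x (Function.invFun (lam r x) u) _ _ rfl).2
  rw [h1] at h2
  exact Prod.ext h1 h2

theorem stmt4 [Nonempty X] (r : X × X → X × X) (α : X → X)
    (h : IsHYBESol r α) (hl : ∀ x, Function.Bijective (lam r x))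
    (hi : r ∘ r = id) :
    HomCycleSet (fun x y => Function.invFun (lam r x) y) α := by
  have hiff := r_eq_iff r hl hi
  have hbij : ∀ x, Function.Bijective (Function.invFun (lam r x)) := fun x =>
    ⟨(Function.rightInverse_invFun (hl x).2).injective,
      (Function.leftInverse_invFun (hl x).1).surjective⟩
  obtain ⟨hα, hyb⟩ := h
  generalize hm : (fun x y => Function.invFun (lam r x) y) = m
  have hm' : ∀ x y, Function.invFun (lam r x) y = m x y := fun x y => by rw [← hm]
  have hbij' : ∀ x, Function.Bijective (m x) := fun x => by rw [← hm]; exact hbij x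
  simp only [hm'] at hiff
  have hr : ∀ x u, r (x, m x u) = (u, m u x) := fun x u => (hiff _ _ _ _).2 ⟨rfl, rfl⟩
  have hαm : ∀ x y, α (m x y) = m (α x) (α y) := by
    intro x u
    have := hα (x, m x u)
    rw [hr] at this
    exact ((hiff _ _ _ _).1 this).1
  have main : ∀ x p a,
      α (m (m x p) (m (α x) a)) = m (m p x) (m (α p) (α a)) ∧
      α (m (m (α x) a) (m x p)) = m (m a (α x)) (m (α a) (α p)) ∧
      α (m (m (α p) (α a)) (m p x)) = m (m (α a) (α p)) (m a (α x)) := by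
    intro x p a
    -- The last coordinate is chosen so that the left side first passes through `(α x, α x · a)`.
    have e := congrFun hyb (x, m x p, m (m x p) (m (α x) a))
    simp only [Function.comp, amr, rma, hr] at e
    obtain ⟨s, t, hst⟩ : ∃ s t, r (m p x, α (m (m x p) (m (α x) a))) = (s, t) := ⟨_, _, rfl⟩
    rw [hst] at e
    obtain ⟨e1, e2⟩ := Prod.ext_iff.1 e
    -- The first components force `s = α p · α a`.
    obtain ⟨rfl, -⟩ := (hiff (α p) s (α a) _).1 (Prod.ext e1.symm rfl)
    rw [hr] at e2
    obtain ⟨h1, rfl⟩ := (hiff _ _ _ _).1 hst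
    obtain ⟨h2, h3⟩ := (hiff _ _ _ _).1 e2
    exact ⟨h1, h2, h3⟩
  exact ⟨⟨hbij', hαm⟩, fun x y z => (main x y z).1, fun x y z => (main x z y).2.1,
    fun x y z => (main z x y).2.2⟩
end

section
/- Let (X,·,α) be a Hom-cycle set with left multiplications σ_x(y) = x·y. Define r : X × X → X × X by r(x,y) = (σ_x^{-1}(y), σ_x^{-1}(y)·x). Then (X,r,α) is a left non-degenerate involutive set-theoretic solution to the Hom-Yang-Baxter equation. -/
/-!
Since each `m x` is bijective, `r` is determined by the identity `r (x, m x u) = (u, m u x)`, which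
is symmetric in `x` and `u`; involutivity, left non-degeneracy and compatibility with `α × α`
are immediate from it. For the Hom-Yang-Baxter equation, write an arbitrary triple as
`(x, x·a, (x·a)·(α x·e))`. Writing `α e = e'` and `α a = a'`, both sides then send it to
`(e', e'·a', (e'·a')·(e·α x))`: along the way the three Hom-cycle set identities are exactly what
puts the second argument of each application of `r` into the form `m p q` or matches the
last coordinates.
-/

open Function

variable {X : Type*}

theorem stmt5 [Nonempty X] (m : X → X → X) (α : X → X)
    (h : HomCycleSet m α) (r : X × X → X × X)
    (hr : ∀ x y : X, r (x, y) =
        (Function.invFun (m x) y, m (Function.invFun (m x) y) x)) :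
    IsHYBESol r α ∧ (∀ x, Function.Bijective (lam r x)) ∧ r ∘ r = id := by
  obtain ⟨⟨hb, hα⟩, h1, h2, h3⟩ := h
  have key : ∀ x u, r (x, m x u) = (u, m u x) := fun x u => by
    rw [hr, Function.leftInverse_invFun (hb x).injective u]
  refine ⟨⟨?_, ?_⟩, ?_, ?_⟩
  · rintro ⟨x, y⟩
    obtain ⟨u, rfl⟩ := (hb x).surjective y
    simp only [hα, key]
  · funext ⟨x, y, z⟩
    obtain ⟨a, rfl⟩ := (hb x).surjective y
    obtain ⟨d, rfl⟩ := (hb (m x a)).surjective z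
    obtain ⟨e, rfl⟩ := (hb (α x)).surjective d
    -- `h2` and `h3` overlap on `α (m (m (α a) (α e)) (m a x))`, so the instances are fixed.
    simp only [Function.comp_apply, amr, rma, key, h1, h2 x e a, h3 a e x]
  · intro x
    refine ⟨fun y z hyz => ?_, fun u => ⟨m x u, by simp only [lam, key]⟩⟩
    obtain ⟨u, rfl⟩ := (hb x).surjective y
    obtain ⟨v, rfl⟩ := (hb x).surjective z
    simp only [lam, key] at hyz
    rw [hyz]
  · funext ⟨x, y⟩
    obtain ⟨u, rfl⟩ := (hb x).surjective y
    simp only [Function.comp_apply, key, id_eq]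
end

section
/- A left Hom-quasigroup (X,α) is a Hom-cycle set if and only if for all x,y,z ∈ X: (1) α²(x)·α(y) = x·α(y), and (2) (x·α(y))·(α(x)·α(z)) = (y·α(x))·(α(y)·α(z)). -/
/-!
Since `α` is an endomorphism, it can be pushed inside the left-hand sides of the three axioms.
Cancelling a left multiplication between the second and third axioms then gives (1), and the
second axiom modulo (1) is (2). Conversely, (1) and (2) give the second and third axioms by
rewriting; the first also needs that `y * x` and `y * α² x` act identically on the image of `α`,
which follows from (1) applied to the left factor `y * x`.
-/

open Function

variable {X : Type*}

theorem stmt6 (m : X → X → X) (α : X → X) (h : LeftHomQuasigroup m α) :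
    HomCycleSet m α ↔
      ((∀ x y, m (α (α x)) (α y) = m x (α y)) ∧
       (∀ x y z, m (m x (α y)) (m (α x) (α z)) =
           m (m y (α x)) (m (α y) (α z)))) := by
  obtain ⟨hb, he⟩ := h
  constructor
  · rintro ⟨-, -, hB, hC⟩
    -- The second axiom at `(y, α y, z)` and the third at `(y, y, z)` have the same left-hand side;
    -- cancelling the left multiplication by `α y * α y` gives (1).
    have h1 : ∀ y z, m (α (α y)) (α z) = m y (α z) := fun y z =>
      (hb (m (α y) (α y))).1 ((hB y (α y) z).symm.trans (hC y y z))
    refine ⟨h1, fun x y z => ?_⟩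
    rw [← hB x y z, he, he, he, h1]
  · rintro ⟨h1, h2⟩
    refine ⟨⟨hb, he⟩, fun x y z => ?_, fun x y z => ?_, fun x y z => ?_⟩
    · -- By (1), left multiplication by `y * x` and by `y * α² x` agree on the image of `α`.
      have key : ∀ w, m (m y x) (α w) = m (m y (α (α x))) (α w) := fun w => by
        rw [← h1 (m y x), he, he, h1]
      rw [he, he, he, h2, ← he y z, key]
    · rw [he, he, he, h1, h2]
    · rw [he, he, he, h1, h2, h1]
end

section
/- Let (X,α) be a left Hom-quasigroup such that α²(x)·α(y) = x·α(y) for all x,y ∈ X. Then the following three conditions (each quantified over all x,y,z ∈ X) are pairwise equivalent: (i) α((xy)(α(x)z)) = (yx)(α(y)α(z)); (ii) α((α(x)y)(xz)) = (yα(x))(α(y)α(z)); (iii) α((α(x)α(y))(xz)) = (α(y)α(x))(yα(z)). -/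
/-!
Write `xy` for `m x y`. Since `α` is an endomorphism, the hypothesis `α²(x)α(y) = xα(y)` lets the
left-hand sides of the three identities be rewritten as
* (i) `(α(x)α(y))(xα(z)) = (yx)(α(y)α(z))`,
* (ii) `(xα(y))(α(x)α(z)) = (yα(x))(α(y)α(z))`,
* (iii) `(xα²(y))(α(x)α(z)) = (α(y)α(x))(yα(z))`.

Up to exchanging `x` and `y`, (i) and (iii) differ only by `yx` versus `yα²(x)` in a factor acting on
`α(y)α(z) = α(yz)`. But `yα²(x) = α²(yx)`, which acts on the image of `α` exactly as `yx` does
(`act_alpha_sq`). Likewise (i) at `α(x)` is (ii), and (ii) at `α(x)` is (i) up to the same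
replacement.
-/

open Function

variable {X : Type*}

/-- The elements `yα²(x) = α²(yx)` and `yx` act identically on the image of `α`. -/
theorem act_alpha_sq (m : X → X → X) (α : X → X) (hα : ∀ x y, α (m x y) = m (α x) (α y))
    (h1 : ∀ x y, m (α (α x)) (α y) = m x (α y)) (x y z : X) :
    m (m y (α (α x))) (m (α y) (α z)) = m (m y x) (m (α y) (α z)) := by
  rw [← hα y z, ← h1 y (α x), ← hα (α y), ← hα y x, h1]

theorem stmt8 (m : X → X → X) (α : X → X) (h : LeftHomQuasigroup m α)
    (h1 : ∀ x y, m (α (α x)) (α y) = m x (α y)) :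
    ((∀ x y z, α (m (m x y) (m (α x) z)) = m (m y x) (m (α y) (α z))) ↔
     (∀ x y z, α (m (m (α x) y) (m x z)) = m (m y (α x)) (m (α y) (α z)))) ∧
    ((∀ x y z, α (m (m (α x) y) (m x z)) = m (m y (α x)) (m (α y) (α z))) ↔
     (∀ x y z, α (m (m (α x) (α y)) (m x z)) = m (m (α y) (α x)) (m y (α z)))) ∧
    ((∀ x y z, α (m (m x y) (m (α x) z)) = m (m y x) (m (α y) (α z))) ↔
     (∀ x y z, α (m (m (α x) (α y)) (m x z)) = m (m (α y) (α x)) (m y (α z)))) := by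
  obtain ⟨-, hα⟩ := h
  have key := act_alpha_sq m α hα h1
  simp only [hα, h1]
  have h12 : (∀ x y z, m (m (α x) (α y)) (m x (α z)) = m (m y x) (m (α y) (α z))) ↔
      ∀ x y z, m (m x (α y)) (m (α x) (α z)) = m (m y (α x)) (m (α y) (α z)) := by
    constructor
    · intro H x y z
      rw [← H (α x) y z, h1]
    · intro H x y z
      rw [← key, ← H (α x) y z, h1]
  have h13 : (∀ x y z, m (m (α x) (α y)) (m x (α z)) = m (m y x) (m (α y) (α z))) ↔
      ∀ x y z, m (m x (α (α y))) (m (α x) (α z)) = m (m (α y) (α x)) (m y (α z)) := by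
    constructor
    · intro H x y z
      rw [key, H y x z]
    · intro H x y z
      rw [← key, H y x z]
  exact ⟨h12, h12.symm.trans h13, h13⟩
end

section
/- Let (X,α) be a left Hom-quasigroup. Then (X,α) is a Hom-cycle set if and only if α²(x)·α(y) = x·α(y) holds for all x,y ∈ X and at least one of the following three identities holds for all x,y,z ∈ X: (i) α((xy)(α(x)z)) = (yx)(α(y)α(z)); (ii) α((α(x)y)(xz)) = (yα(x))(α(y)α(z)); (iii) α((α(x)α(y))(xz)) = (α(y)α(x))(yα(z)). -/
/-!
Write `xy` for `m x y`, and let (E) be the identity `α²(x)α(y) = xα(y)`. Call `x` *good* if (E) holds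
at `x` for all `y`.

Given (E), each of the three identities is a rewriting of another: (ii) is (i) at `α(x)`, (i) is
(ii) at `α(x)`, and (iii) is (i) with `x`, `y` interchanged.

Conversely, in a Hom-cycle set, comparing (i) at `α(x)` with (ii) and cancelling shows that every
element of the image of `α` is good (`good_image`). Comparing (i) with (iii) shows that `yx` is good
whenever `x` is (`good_mul`). Since `α(α²(x)y) = α(xy)` by goodness of `α(x)`, comparing (i) at `x`
with (ii) at `α(x)` gives `(yx)α(w) = (yα²(x))α(w)` (`mul_sq`). Hence
`(yx)α(w) = (yα²(x))α(w) = (α²(y)α⁴(x))α(w) = (α²(y)α²(x))α(w)`, so every product is good;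
and every element is a product.
-/


open Function

variable {X : Type*}

section HomCycle

variable {m : X → X → X} {α : X → X}

theorem HomCycleSet.good_image (H : HomCycleSet m α) (x z : X) :
    m (α (α (α x))) (α z) = m (α x) (α z) := by
  obtain ⟨⟨hb, hα⟩, h1, h2, -⟩ := H
  -- Any left factor may be cancelled, so the second variable can be specialised to `x`.
  have a := (h1 (α x) x z).trans (h2 x x z).symm
  simp only [hα] at a
  exact (hb _).1 a

theorem HomCycleSet.good_mul (H : HomCycleSet m α) {x : X}
    (hx : ∀ z, m (α (α x)) (α z) = m x (α z)) (y w : X) :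
    m (α (α (m y x))) (α w) = m (m y x) (α w) := by
  obtain ⟨⟨hb, hα⟩, h1, -, h3⟩ := H
  obtain ⟨z, rfl⟩ := (hb y).2 w
  have a := h1 x y z
  have b := h3 y x z
  simp only [hα] at a b ⊢
  rw [b, ← a, hx]

/-- Replacing `x` by `α² x` in a product `yx` does not change its action on the image of `α`. -/
theorem HomCycleSet.mul_sq (H : HomCycleSet m α) (x y w : X) :
    m (m y x) (α w) = m (m y (α (α x))) (α w) := by
  have g := H.good_image
  obtain ⟨⟨hb, hα⟩, h1, h2, -⟩ := H
  obtain ⟨z, rfl⟩ := (hb y).2 w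
  have a := h1 x y z
  have b := h2 (α x) y z
  simp only [hα] at a b ⊢
  rw [g] at b
  rw [← a, ← b]

theorem HomCycleSet.good (H : HomCycleSet m α) (x w : X) :
    m (α (α x)) (α w) = m x (α w) := by
  have hα := H.1.2
  have key : ∀ y t, m (α (α (m y t))) (α w) = m (m y t) (α w) := by
    intro y t
    have a := H.good_mul (H.good_image (α t)) y w
    have b := H.mul_sq (α (α t)) (α (α y)) w
    simp only [hα] at a b ⊢
    rw [b, a, ← H.mul_sq]
  -- The left factor is arbitrary; it only serves to write `x` as a product.
  obtain ⟨t, ht⟩ := (H.1.1 x).2 x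
  rw [← ht]
  exact key x t

end HomCycle

theorem stmt9 (m : X → X → X) (α : X → X) (h : LeftHomQuasigroup m α) :
    HomCycleSet m α ↔
      ((∀ x y, m (α (α x)) (α y) = m x (α y)) ∧
       ((∀ x y z, α (m (m x y) (m (α x) z)) = m (m y x) (m (α y) (α z))) ∨
        (∀ x y z, α (m (m (α x) y) (m x z)) = m (m y (α x)) (m (α y) (α z))) ∨
        (∀ x y z, α (m (m (α x) (α y)) (m x z)) = m (m (α y) (α x)) (m y (α z))))) := by
  constructor
  · intro H
    exact ⟨H.good, Or.inl H.2.1⟩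
  · rintro ⟨E, hor⟩
    obtain ⟨hb, hα⟩ := h
    -- (E) applied to a product on the left and to a product on the right.
    have E' : ∀ x y z, m (m (α (α x)) (α (α y))) (m (α x) (α z)) = m (m x y) (m (α x) (α z)) := by
      intro x y z
      simpa only [hα] using E (m x y) (m x z)
    have i_ii : (∀ x y z, α (m (m x y) (m (α x) z)) = m (m y x) (m (α y) (α z))) →
        ∀ x y z, α (m (m (α x) y) (m x z)) = m (m y (α x)) (m (α y) (α z)) := by
      intro h1 x y z
      rw [← h1]
      simp only [hα, E]
    have ii_i : (∀ x y z, α (m (m (α x) y) (m x z)) = m (m y (α x)) (m (α y) (α z))) →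
        ∀ x y z, α (m (m x y) (m (α x) z)) = m (m y x) (m (α y) (α z)) := by
      intro h2 x y z
      have a := h2 (α x) y z
      rw [← E' y x z, E y (α x), ← a]
      simp only [hα, E]
    have i_iii : (∀ x y z, α (m (m x y) (m (α x) z)) = m (m y x) (m (α y) (α z))) →
        ∀ x y z, α (m (m (α x) (α y)) (m x z)) = m (m (α y) (α x)) (m y (α z)) := by
      intro h1 x y z
      have a := h1 y x z
      simp only [hα] at a ⊢
      rw [E', ← a, E]
    have iii_i : (∀ x y z, α (m (m (α x) (α y)) (m x z)) = m (m (α y) (α x)) (m y (α z))) →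
        ∀ x y z, α (m (m x y) (m (α x) z)) = m (m y x) (m (α y) (α z)) := by
      intro h3 x y z
      have a := h3 y x z
      simp only [hα] at a ⊢
      rw [← E' y x, a, E]
    have h1 : ∀ x y z, α (m (m x y) (m (α x) z)) = m (m y x) (m (α y) (α z)) := by
      rcases hor with h1 | h2 | h3
      · exact h1
      · exact ii_i h2
      · exact iii_i h3
    exact ⟨⟨hb, hα⟩, h1, i_ii h1, i_iii h1⟩
end

section
/- Let (X,·,α) be a Hom-cycle set with left multiplications σ_x(y) = x·y, and let r : X × X → X × X be defined by r(x,y) = (σ_x^{-1}(y), σ_x^{-1}(y)·x), so r(x,y) = (λ_x(y), ρ_y(x)) with λ_x = σ_x^{-1}. Then the map Δ : X × X → X × X, (x,y) ↦ (x·y, y·x), is bijective if and only if ρ_y is bijective for every y ∈ X. -/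
/-!
If `y = m x u`, then `u = (m x)⁻¹ y`, so `Δ (x, u) = (y, ρ_y x)`. Since every `m x` is bijective,
`(x, u) ↦ (m x u, x)` is a bijection of `X × X`, and `Δ` is its composite with the fibrewise map
`(y, x) ↦ (y, ρ_y x)`. The latter is bijective iff every `ρ_y` is.
-/

open Function

variable {X : Type*}

/-- A map preserving the first coordinate is bijective iff it is bijective on each fibre. -/
lemma bijective_fibrewise_iff {A B : Type*} (f : A → B → B) :
    Function.Bijective (fun p : A × B => (p.1, f p.1 p.2)) ↔
      ∀ a, Function.Bijective (f a) := by
  constructor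
  · rintro ⟨hi, hs⟩ a
    refine ⟨fun b c hbc => ?_, fun b => ?_⟩
    · exact congrArg Prod.snd (@hi (a, b) (a, c) (Prod.ext rfl hbc))
    · obtain ⟨⟨a', c⟩, hc⟩ := hs (a, b)
      obtain ⟨rfl, h2⟩ := Prod.mk.inj hc
      exact ⟨c, h2⟩
  · intro hf
    refine ⟨?_, ?_⟩
    · rintro ⟨a, b⟩ ⟨a', b'⟩ hab
      obtain ⟨h1, h2⟩ := Prod.mk.inj hab
      dsimp only at h1 h2
      subst h1
      rw [(hf a).1 h2]
    · rintro ⟨a, b⟩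
      obtain ⟨c, hc⟩ := (hf a).2 b
      exact ⟨(a, c), Prod.ext rfl hc⟩

theorem stmt10 [Nonempty X] (m : X → X → X) (α : X → X)
    (h : HomCycleSet m α) (r : X × X → X × X)
    (hr : ∀ x y : X, r (x, y) =
        (Function.invFun (m x) y, m (Function.invFun (m x) y) x)) :
    Function.Bijective (fun p : X × X => (m p.1 p.2, m p.2 p.1)) ↔
      ∀ y, Function.Bijective (rho r y) := by
  have hm : ∀ x, Function.Bijective (m x) := h.1.1
  have hq : Function.Bijective (fun p : X × X => (m p.1 p.2, p.1)) :=
    Prod.swap_bijective.comp ((bijective_fibrewise_iff m).2 hm)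
  have hfac : (fun p : X × X => (m p.1 p.2, m p.2 p.1)) =
      (fun p : X × X => (p.1, rho r p.1 p.2)) ∘ (fun p : X × X => (m p.1 p.2, p.1)) := by
    funext ⟨x, u⟩
    simp only [Function.comp_apply, rho, hr, Function.leftInverse_invFun (hm x).1 u]
  rw [hfac, hq.of_comp_iff, bijective_fibrewise_iff]
end

section
/- Let (X,·,α) be a non-degenerate Hom-cycle set, i.e., a Hom-cycle set whose map Δ : (x,y) ↦ (x·y, y·x) is bijective, and let ∘ be the dual operation on X, i.e., the (unique) binary operation satisfying (x·y)∘(y·x) = x and (x∘y)·(y∘x) = x for all x,y ∈ X. Then (X,∘,α) is a non-degenerate Hom-cycle set: the left multiplications of ∘ are bijective, α(x∘y) = α(x)∘α(y) for all x,y, the three Hom-cycle set identities hold for ∘, and the map (x,y) ↦ (x∘y, y∘x) is bijective. -/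
/-!
The map `Δ : (x, y) ↦ (m x y, m y x)` has the inverse `(a, b) ↦ (c a b, c b a)`, so every identity for `c`
is checked by naming the values of `c` and rewriting the data as `m`-products.

For the first two identities, put `a = c _ _` and `a' = c _ _` for the two inner factors, and
`e = c a a'`, `f = c a' a`, so that `a = m e f`, `a' = m f e`. Dividing the remaining two factors on the
left by `α e` and `α f` turns all the data into products of the shapes occurring in the identities
of `m`; these give `α y` and `α z` in the form `m p q`, `m q p`, whence `c (α y) (α z) = p`.

The third identity for `m`, compared with the second one, is equivalent to
`m y (α z) = m (α (α y)) (α z)`. Hence every `m q` permutes the range of `α`, so that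
`m q p = α z` forces `p` to lie in the range of `α`. This transfers the relation to
`c y (α z) = c (α (α y)) (α z)`, and the third identity for `c` then follows from its second one.
-/

open Function

variable {X : Type*}

/-- The second identity at `α y` and the third at `y` have the same left-hand side, so `α` applied twice to
the left factor is invisible on the range of `α`. -/
theorem HomCycleSet.mul_map_right {m : X → X → X} {α : X → X} (h : HomCycleSet m α) (y z : X) :
    m y (α z) = m (α (α y)) (α z) := by
  obtain ⟨⟨hb, -⟩, -, h2, h3⟩ := h
  apply (hb (m (α y) (α y))).1
  rw [← h3 y y z, h2 y (α y) z]

/-- Left division preserves the range of `α`. -/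
theorem HomCycleSet.exists_of_mul_eq_map {m : X → X → X} {α : X → X} (h : HomCycleSet m α)
    {q p z : X} (hp : m q p = α z) : ∃ w, p = α w := by
  obtain ⟨w, hw⟩ := (h.1.1 (α q)).2 z
  refine ⟨w, (h.1.1 q).1 ?_⟩
  rw [hp, h.mul_map_right, ← h.1.2, hw]

theorem stmt11 (m : X → X → X) (α : X → X) (h : HomCycleSet m α)
    (hnd : Function.Bijective (fun p : X × X => (m p.1 p.2, m p.2 p.1)))
    (c : X → X → X)
    (hc1 : ∀ x y, c (m x y) (m y x) = x)
    (hc2 : ∀ x y, m (c x y) (c y x) = x) :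
    HomCycleSet c α ∧
      Function.Bijective (fun p : X × X => (c p.1 p.2, c p.2 p.1)) := by
  have hmul := h.mul_map_right
  have hrange := @HomCycleSet.exists_of_mul_eq_map _ _ _ h
  obtain ⟨⟨hb, hα⟩, h1, h2, h3⟩ := h
  have hsurj : ∀ x y, ∃ a b, x = m a b ∧ y = m b a := fun x y =>
    ⟨c x y, c y x, (hc2 x y).symm, (hc2 y x).symm⟩
  have hcb : ∀ x, Function.Bijective (c x) := by
    intro x
    constructor
    · intro y y' hy
      -- `c y x` is the left quotient of `x` by `c x y`, so `c x y` determines `y`.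
      have hw : c y x = c y' x := by
        apply (hb (c x y)).1
        rw [hc2, hy, hc2]
      rw [← hc2 y x, ← hc2 y' x, hw, hy]
    · intro z
      obtain ⟨w, rfl⟩ := (hb z).2 x
      exact ⟨m w z, hc1 z w⟩
  have hcα : ∀ x y, α (c x y) = c (α x) (α y) := by
    intro x y
    obtain ⟨a, b, rfl, rfl⟩ := hsurj x y
    rw [hc1, hα, hα, hc1]
  have c1 : ∀ x y z, α (c (c x y) (c (α x) z)) = c (c y x) (c (α y) (α z)) := by
    intro x y z
    obtain ⟨a, b, rfl, rfl⟩ := hsurj x y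
    obtain ⟨a', d, hx, rfl⟩ := hsurj (α (m a b)) z
    rw [hx, hc1, hc1, hc1]
    obtain ⟨e, f, rfl, rfl⟩ := hsurj a a'
    obtain ⟨k, rfl⟩ := (hb (α e)).2 b
    rw [h1] at hx
    obtain rfl := (hb _).1 hx
    rw [hc1, h2, h3, hc1, hc1]
  have c2 : ∀ x y z, α (c (c (α x) y) (c x z)) = c (c y (α x)) (c (α y) (α z)) := by
    intro x y z
    obtain ⟨a', d, rfl, rfl⟩ := hsurj x z
    obtain ⟨a, b, hx, rfl⟩ := hsurj (α (m a' d)) y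
    rw [hx, hc1, hc1, hc1]
    obtain ⟨e, f, rfl, rfl⟩ := hsurj a a'
    obtain ⟨g, rfl⟩ := (hb (α f)).2 d
    rw [h1] at hx
    obtain rfl := (hb _).1 hx
    rw [hc1, h3, h2, hc1, hc1]
  have hcmul : ∀ y z, c (α (α y)) (α z) = c y (α z) := by
    intro y z
    obtain ⟨p, q, rfl, hz⟩ := hsurj y (α z)
    obtain ⟨w, rfl⟩ := hrange hz.symm
    -- Replacing `q` by `α (α q)` keeps `α z` and changes `y` into `α (α y)`.
    have e1 : α (α (m (α w) q)) = m (α w) (α (α q)) := by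
      rw [hα, hα, ← hmul]
    have e2 : α z = m (α (α q)) (α w) := by rw [hz, hmul]
    rw [e1]
    conv_lhs => rw [e2, hc1]
    rw [hz, hc1]
  refine ⟨⟨⟨hcb, hcα⟩, c1, c2, fun x y z => ?_⟩, ?_⟩
  · rw [c2, hcmul]
  · refine Function.bijective_iff_has_inverse.2 ⟨fun p => (m p.1 p.2, m p.2 p.1), ?_, ?_⟩
    · rintro ⟨x, y⟩
      simp [hc2]
    · rintro ⟨x, y⟩
      simp [hc1]
end

section
/- Let (X,·,α) be a left Hom-quasigroup and let (X,·′,α) be its twist, where x ·′ y = α(x)·y. Then (X,·,α) is an im-cycle set if and only if (X,·′,α) is a Hom-cycle set. -/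
/-!
Write `xᵢ` for `αⁱ x` and juxtaposition for `m`. Since `α` is an endomorphism of `m`, the three Hom-cycle
identities of the twist read

* T1: `(x₃y₂)(x₃z₁) = (y₂x₁)(y₂z₁)`,
* T2: `(x₄y₂)(x₂z₁) = (y₂x₂)(y₂z₁)`,
* T3: `(x₄y₃)(x₂z₁) = (y₃x₂)(y₁z₁)`.

Modulo `x₃y₁ = x₁y₁` each of them is an instance of the im-cycle identity. Conversely, T2 at `α y`
has the same left side as T3, so cancelling `y₃x₂` gives `y₃z₁ = y₁z₁`. Then T1 at `α y` becomes
`(x₁y₃)(x₁z₁) = (y₁x₁)(y₁z₁)`, and its `y₃` may be lowered to `y₁` because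
`(x₁y₁)w₁ = (x₃y₃)w₁ = (x₁y₃)w₁`.
-/

open Function

variable {X : Type*}

/-- `(X, m, α)` is an im-cycle set. -/
def ImCycleSet (m : X → X → X) (α : X → X) : Prop :=
  LeftHomQuasigroup m α ∧
  (∀ x y, m (α (α (α x))) (α y) = m (α x) (α y)) ∧
  (∀ x y z, m (m (α x) (α y)) (m (α x) (α z)) = m (m (α y) (α x)) (m (α y) (α z)))

theorem stmt12 (m : X → X → X) (α : X → X) (h : LeftHomQuasigroup m α) :
    ImCycleSet m α ↔ HomCycleSet (fun x y => m (α x) y) α := by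
  obtain ⟨hb, hα⟩ := h
  constructor
  · rintro ⟨-, h1, h2⟩
    refine ⟨⟨fun x => hb (α x), fun x y => hα _ _⟩, ?_, ?_, ?_⟩ <;> intro x y z <;>
      simp only [hα, h1]
    · exact h2 _ _ _
    · exact h2 _ _ _
    · rw [h2 (α x) (α (α y)) z, h1, h1]
  · rintro ⟨-, t1, t2, t3⟩
    simp only [hα] at t1 t2 t3
    have h1 : ∀ x y, m (α (α (α x))) (α y) = m (α x) (α y) := fun y z =>
      (hb _).injective ((t2 y (α y) z).symm.trans (t3 y y z))
    have lower : ∀ x y w, m (m (α x) (α (α (α y)))) (α w) = m (m (α x) (α y)) (α w) := by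
      intro x y w
      have := h1 (m x y) w
      simp only [hα] at this
      rwa [h1 x (α (α y))] at this
    refine ⟨⟨hb, hα⟩, h1, fun x y z => ?_⟩
    have t := t1 x (α y) z
    rw [h1, h1, h1, h1] at t
    rw [← hα x z, ← lower, hα, t]
end

section
/- Let X be a cycle set (a left quasigroup satisfying (xy)(xz) = (yx)(yz) for all x,y,z) with an endomorphism α such that α³(x)·α(y) = α(x)·α(y) for all x,y ∈ X. Then the twist (X,·′,α), where x ·′ y = α(x)·y, is a Hom-cycle set. -/
open Function

variable {X : Type*}

theorem stmt13 (m : X → X → X) (α : X → X)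
    (hq : ∀ x, Function.Bijective (m x))
    (hcs : ∀ x y z, m (m x y) (m x z) = m (m y x) (m y z))
    (hend : ∀ x y, α (m x y) = m (α x) (α y))
    (h3 : ∀ x y, m (α (α (α x))) (α y) = m (α x) (α y)) :
    HomCycleSet (fun x y => m (α x) y) α := by
  refine ⟨⟨fun x => hq (α x), fun x y => hend (α x) y⟩, ?_, ?_, ?_⟩ <;> intro x y z
  · simp only [hend, h3]
    exact hcs _ _ _
  · simp only [hend, h3]
    exact hcs _ _ _
  · simp only [hend, h3]
    -- `hcs` applies at `α² x`, `α³ y`, so the exponent of `y` acting on the left is raised back.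
    rw [← h3 y (α x), ← h3 y z]
    exact hcs _ _ _
end

section
/- Let (X,·,α) be a Hom-cycle set. Then its twist (X,·′,α), where x ·′ y = α(x)·y, is an im-cycle set; that is, α³(x) ·′ α(y) = α(x) ·′ α(y) and (α(x) ·′ α(y)) ·′ (α(x) ·′ α(z)) = (α(y) ·′ α(x)) ·′ (α(y) ·′ α(z)) for all x,y,z ∈ X. -/
/-!
Everything reduces to one identity, `HomCycleSet.cube_mul`: `α³(w) α(v) = α(w) α(v)`.

The right-hand side of the third axiom at `(x, α(y), z)` and the left-hand side of the second
axiom at `(y, x, z)` are both `(α²(y) α(x)) (α(y) α(z))`, so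
`(α²(x) α³(y)) α(xz) = (x α(y)) α(xz)`. Since `xz` is arbitrary, `α²(u)` and `u` act identically
on the image of `α` whenever `u = x α(y)`, and every element of the image of `α` has this form.
The cycle identity of the twist then follows from the second axiom and `cube_mul`.
-/

open Function

variable {X : Type*}

/-- Left multiplications by `α(w)` and `α³(w)` agree on the image of `α`. -/
theorem HomCycleSet.cube_mul {m : X → X → X} {α : X → X} (h : HomCycleSet m α) (w v : X) :
    m (α (α (α w))) (α v) = m (α w) (α v) := by
  obtain ⟨⟨hb, hα⟩, -, h2, h3⟩ := h
  have key : ∀ x y z, m (m (α (α x)) (α (α (α y)))) (m (α x) (α z))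
      = m (m x (α y)) (m (α x) (α z)) := by
    intro x y z
    have e3 := h3 x (α y) z
    have e2 := h2 y x z
    simp only [hα] at e2 e3
    exact e3.trans e2
  -- Write `w = w y` and `v = α(w) z`, so that `key` applies with `x = α(w)`.
  obtain ⟨y, hy⟩ := (hb w).2 w
  obtain ⟨z, hz⟩ := (hb (α w)).2 v
  have k := key (α w) y z
  simp only [← hα] at k
  simpa only [hy, hz, hα] using k

theorem stmt14 (m : X → X → X) (α : X → X) (h : HomCycleSet m α) :
    ImCycleSet (fun x y => m (α x) y) α := by
  have hc := h.cube_mul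
  obtain ⟨⟨hb, hα⟩, -, h2, -⟩ := h
  refine ⟨⟨fun x => hb (α x), fun x y => hα (α x) y⟩, fun x y => hc (α x) y, fun x y z => ?_⟩
  have e := h2 (α x) (α y) z
  simp only [hα] at e ⊢
  rw [e, hc y (α x)]
end

section
/- Let (X,·,α) be a non-degenerate Hom-cycle set, i.e., a Hom-cycle set whose map Δ : (x,y) ↦ (x·y, y·x) is bijective. Then its twist (X,·′,α), where x ·′ y = α(x)·y, is non-degenerate: the map (x,y) ↦ (x ·′ y, y ·′ x) = (α(x)·y, α(y)·x) is bijective. -/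
/-! Write `σ_x = m x` and `I = α(X)`. The argument rests on four facts.

* If `σ_v w ∈ I` then `w ∈ I` (first identity, `range_of_mul_mem`).
* `σ_{α²y}` and `σ_y` agree on `I` (compare the second identity at `(x, α y)` with the third,
  `mul_sq`). Hence a form of the cycle set equation for the twist `x ∘ y = α x · y`, with last
  argument in `I`: for `u = x ∘ y` and `v = y ∘ x`, one has `u · (x · αz) = v · (y · αz)`
  (`cycle`).
* The twisted square map `T x = α x · x` is bijective: `T x = u` means
  `(x · αx, αx · x) = (αu, u)`, and non-degeneracy of `m` shows that the unique `(x, w)` with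
  `(x · w, w · x) = (αu, u)` satisfies `w = αx`.
* Taking `z = x` in the cycle equation gives `u · T(αx) = T(αv)`, which recovers `αx` from
  `(u, v)` (`square_eq`).

Injectivity follows at once: `(u, v)` determines `αx` and, by symmetry, `αy`, hence also `y` and
`x`. For surjectivity, solve `u · T a = T(αv)` for `a ∈ I`, let `y` satisfy `a · y = u` and let
`x` satisfy `αy · x = v`; the same formula shows `αx = a`. -/

open Function

variable {X : Type*}

namespace HomCycleSet

variable {m : X → X → X} {α : X → X}

theorem inj (h : HomCycleSet m α) {x a b : X} (e : m x a = m x b) : a = b :=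
  (h.1.1 x).1 e

theorem map (h : HomCycleSet m α) (x y : X) : α (m x y) = m (α x) (α y) := h.1.2 x y

/-- The range of `α` contains its preimage under every left multiplication. -/
theorem range_of_mul_mem (h : HomCycleSet m α) {v w t : X} (e : m v w = α t) :
    ∃ z, w = α z := by
  obtain ⟨x, hx⟩ := (h.1.1 v).2 v
  obtain ⟨s, hs⟩ := (h.1.1 (m x v)).2 t
  obtain ⟨z, hz⟩ := (h.1.1 (α x)).2 s
  have h1 := h.2.1 x v z
  rw [hz, hs, hx, ← e, ← h.map] at h1
  exact ⟨_, h.inj h1⟩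

/-- The left multiplications by `α² y` and by `y` agree on the range of `α`. -/
theorem mul_sq_s15 (h : HomCycleSet m α) (y z : X) : m (α (α y)) (α z) = m y (α z) :=
  h.inj ((h.2.2.1 y (α y) z).symm.trans (h.2.2.2 y y z))

theorem cycle_aux (h : HomCycleSet m α) (x y z : X) :
    m (α (m x y)) (m x (α z)) = m (m y x) (m (α y) (α z)) := by
  rw [← h.2.1 x y z, h.map (m x y), h.map (α x), h.mul_sq_s15]

/-- With `u = α x · y` and `v = α y · x`, one has `u · (x · αz) = v · (y · αz)`. The cycle set
equation for the twist gives this with `α` applied to `u, v, x, y` on the outside; replacing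
`x, y` by `α x, α y` and using `mul_sq` removes these occurrences of `α`. -/
theorem cycle (h : HomCycleSet m α) (x y z : X) :
    m (m (α x) y) (m x (α z)) = m (m (α y) x) (m y (α z)) := by
  have key : ∀ x y z, m (α (m (α x) y)) (m (α x) (α z)) =
      m (α (m (α y) x)) (m (α y) (α z)) := by
    intro x y z
    rw [h.cycle_aux (α x) y z, h.map (α y) x, h.mul_sq_s15 y x]
  have k := key (α x) (α y) z
  rw [← h.map (α x) y, ← h.map (α y) x, ← h.map (α x) z, ← h.map (α y) z, h.mul_sq_s15, h.mul_sq_s15,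
    h.map, h.map, h.mul_sq_s15, h.mul_sq_s15] at k
  exact k

/-- With `u = α x · y`, `v = α y · x` and `T` the twisted square map, `u · T(α x) = T(α v)`. -/
theorem square_eq (h : HomCycleSet m α) (x y : X) :
    m (m (α x) y) (m (α (α x)) (α x)) =
      m (α (α (m (α y) x))) (α (m (α y) x)) := by
  rw [h.mul_sq_s15, h.mul_sq_s15, h.cycle, h.map (α y) x, h.mul_sq_s15]

theorem square_injective (h : HomCycleSet m α)
    (hnd : Function.Bijective (fun p : X × X => (m p.1 p.2, m p.2 p.1))) {x y : X}
    (e : m (α x) x = m (α y) y) : x = y := by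
  have e' : m x (α x) = m y (α y) := by
    rw [← h.mul_sq_s15 x, ← h.mul_sq_s15 y, ← h.map, ← h.map, e]
  have := hnd.1 (a₁ := (x, α x)) (a₂ := (y, α y)) (Prod.ext e' e)
  exact congrArg Prod.fst this

theorem square_surjective (h : HomCycleSet m α)
    (hnd : Function.Bijective (fun p : X × X => (m p.1 p.2, m p.2 p.1))) (u : X) :
    ∃ x, m (α x) x = u := by
  obtain ⟨⟨x, w⟩, hp⟩ := hnd.2 (α u, u)
  have h1 : m x w = α u := congrArg Prod.fst hp
  have h2 : m w x = u := congrArg Prod.snd hp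
  obtain ⟨w₀, hw₀⟩ := h.range_of_mul_mem h1
  -- Both `(w, α² x)` and `(α x, α w)` are sent to `(α² u, α u)`.
  have e1 : m w (α (α x)) = m (α x) (α w) := by
    rw [← h.mul_sq_s15 w, ← h.map, ← h.map, ← h.map, h2, h1]
  have e2 : m (α (α x)) w = m (α w) (α x) := by
    rw [← h.map, h2, ← h1, hw₀, h.mul_sq_s15]
  have := hnd.1 (a₁ := (w, α (α x))) (a₂ := (α x, α w)) (Prod.ext e1 e2)
  have e3 : w = α x := congrArg Prod.fst this
  exact ⟨x, by rw [← e3, h2]⟩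

end HomCycleSet

theorem stmt15 (m : X → X → X) (α : X → X) (h : HomCycleSet m α)
    (hnd : Function.Bijective (fun p : X × X => (m p.1 p.2, m p.2 p.1))) :
    Function.Bijective (fun p : X × X => (m (α p.1) p.2, m (α p.2) p.1)) := by
  constructor
  · rintro ⟨x, y⟩ ⟨x', y'⟩ e
    have e1 : m (α x) y = m (α x') y' := congrArg Prod.fst e
    have e2 : m (α y) x = m (α y') x' := congrArg Prod.snd e
    have hx : α x = α x' := by
      apply h.square_injective hnd
      apply h.inj (x := m (α x) y)
      rw [h.square_eq x y, e1, h.square_eq x' y', e2]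
    have hy : α y = α y' := by
      apply h.square_injective hnd
      apply h.inj (x := m (α y) x)
      rw [h.square_eq y x, e2, h.square_eq y' x', e1]
    rw [hx] at e1
    rw [hy] at e2
    exact Prod.ext (h.inj e2) (h.inj e1)
  · rintro ⟨u, v⟩
    obtain ⟨t, ht⟩ := (h.1.1 u).2 (m (α (α v)) (α v))
    obtain ⟨a, ha⟩ := h.square_surjective hnd t
    -- The element `a` with `u · T a = T(α v)` lies in the range of `α`.
    obtain ⟨t', ht'⟩ := h.range_of_mul_mem (ht.trans (h.map (α v) v).symm)
    obtain ⟨x', rfl⟩ := h.range_of_mul_mem (ha.trans ht')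
    obtain ⟨y, hy⟩ := (h.1.1 (α x')).2 u
    obtain ⟨x, hx⟩ := (h.1.1 (α y)).2 v
    have hv : α (m (α y) x') = α v := by
      apply h.square_injective hnd
      rw [← h.square_eq x' y, hy, ha, ht]
    have hxx : α x = α x' := by
      apply h.inj (x := α (α y))
      rw [← h.map, ← h.map, hx, hv]
    refine ⟨(x, y), Prod.ext ?_ hx⟩
    change m (α x) y = u
    rw [hxx, hy]
end

section
/- Let (X,·,α) be a non-degenerate Hom-cycle set, i.e., a Hom-cycle set whose map Δ : (x,y) ↦ (x·y, y·x) is bijective. Then the map q′ : X → X defined by q′(x) = α(x)·x is bijective. -/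
/-!
Write `xy` for `m x y` and `I` for the image of `α`. The first Hom-cycle identity shows that every
left multiplication restricts to a permutation of `I` (`mul_mem_image`, `mem_image_of_mul`).
Comparing the three identities on `I` and cancelling, one finds that `α (α x)` and `x` act in the
same way on `I` (`sq_act`).

Injectivity of `x ↦ w = α(x)x`: since `α x ∈ I`, we get `x α(x) = α²(x) α(x) = α w`, so
`Δ (α x, x) = (w, α w)` and `w` determines `x`.

Surjectivity: given `z`, choose `x, y` with `Δ (x, y) = (z, α z)`. As `yx = α z ∈ I`, also `x ∈ I`.
The first identity yields that `y` and `α x` act in the same way on `I`, whence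
`y α(y) = α(x) α(y) = α(xy) = α z = yx`, so `x = α y` and `z = xy = α(y)y`.
-/

open Function

variable {X : Type*}

/-- Left multiplications preserve the image of `α`. -/
theorem mul_mem_image {X : Type*} {m : X → X → X} {α : X → X} (h : HomCycleSet m α) (w z : X) :
    ∃ t, m w (α z) = α t := by
  obtain ⟨⟨hb, ha⟩, h1, -, -⟩ := h
  obtain ⟨x, hx⟩ := (hb w).2 w
  obtain ⟨s, rfl⟩ := (hb w).2 z
  refine ⟨m (m x w) (m (α x) s), ?_⟩
  rw [h1, hx, ha]

/-- Left multiplications reflect membership in the image of `α`. -/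
theorem mem_image_of_mul {X : Type*} {m : X → X → X} {α : X → X} (h : HomCycleSet m α)
    {w u z : X} (hu : m w u = α z) : ∃ t, u = α t := by
  obtain ⟨⟨hb, ha⟩, h1, -, -⟩ := h
  obtain ⟨x, hx⟩ := (hb w).2 w
  obtain ⟨s, rfl⟩ := (hb (m x w)).2 z
  obtain ⟨s, rfl⟩ := (hb (α x)).2 s
  refine ⟨m w s, (hb w).1 ?_⟩
  rw [hu, h1, hx, ha]

/-- `α³(x)` and `α(x)` act in the same way on the image of `α`. -/
theorem cube_act {X : Type*} {m : X → X → X} {α : X → X} (h : HomCycleSet m α) (x z : X) :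
    m (α (α (α x))) (α z) = m (α x) (α z) := by
  obtain ⟨⟨hb, ha⟩, h1, h2, -⟩ := h
  have e1 := h1 (α x) x z
  have e2 := h2 x x z
  rw [← e2] at e1
  simp only [ha] at e1
  exact (hb _).1 e1

/-- `α²(w)` and `w` act in the same way on the image of `α`. -/
theorem sq_act {X : Type*} {m : X → X → X} {α : X → X} (h : HomCycleSet m α) (w z : X) :
    m (α (α w)) (α z) = m w (α z) := by
  have hc := cube_act h
  obtain ⟨⟨hb, ha⟩, h1, -, h3⟩ := h
  -- Any element `t` can be used to write `w` in the form `α²(t)x`.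
  let t := w
  obtain ⟨x, hx⟩ := (hb (α (α t))).2 w
  obtain ⟨s, rfl⟩ := (hb t).2 z
  have e3 := h3 (α x) (α t) s
  have e1 := h1 x (α (α t)) s
  simp only [ha, hc] at e1 e3
  have e : α (α w) = m (α (α t)) (α (α x)) := by
    rw [← hx, ha, ha, hc]
  rw [e, ha, ← e3, e1, hx]

theorem stmt17 (m : X → X → X) (α : X → X) (h : HomCycleSet m α)
    (hnd : Function.Bijective (fun p : X × X => (m p.1 p.2, m p.2 p.1))) :
    Function.Bijective (fun x => m (α x) x) := by
  have hs := sq_act h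
  have hp := mul_mem_image h
  have hm := @mem_image_of_mul _ _ _ h
  obtain ⟨⟨hb, ha⟩, h1, -, -⟩ := h
  have key : ∀ x, m x (α x) = α (m (α x) x) := fun x => by rw [ha, hs]
  constructor
  · intro x y hxy
    have hxy' : m (α x) x = m (α y) y := hxy
    have : ((α x, x) : X × X) = (α y, y) := by
      apply hnd.1
      simp only [key, hxy']
    exact (Prod.ext_iff.1 this).2
  · intro z
    obtain ⟨⟨x, y⟩, hxy⟩ := hnd.2 (z, α z)
    obtain ⟨e1, e2⟩ := Prod.ext_iff.1 hxy
    dsimp only at e1 e2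
    obtain ⟨t, rfl⟩ := hm e2
    have hy : ∀ s, m y (α s) = m (α (α t)) (α s) := by
      intro s
      have e := h1 y (α t) s
      obtain ⟨r, hr⟩ := hp y s
      rw [e1, e2, ha, ha, hs, hr, hs, ← hr] at e
      exact (hb _).1 e
    have hx : α t = α y := by
      apply (hb y).1
      rw [e2, hy, ← ha, e1]
    refine ⟨y, ?_⟩
    dsimp only
    rw [← hx, e1]
end
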